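/- Let G be a connected graph possessing a free parameter set of cardinality r. Then for every even natural number k > 2r, the number of basic k-covers of G is at least the binomial coefficient C(k/2+1, r). -/

import Mathlib

/-- A `k`-cover of a graph `G`. -/
def IsCover {n : ℕ} (G : SimpleGraph (Fin n)) (k : ℕ) (α : Fin n → ℕ) : Prop :=
  ∀ ⦃i j : Fin n⦄, G.Adj i j → k ≤ α i + α j

/-- A basic `k`-cover. -/
def IsBasicCover {n : ℕ} (G : SimpleGraph (Fin n)) (k : ℕ) (α : Fin n → ℕ) : Prop :=
  IsCover G k α ∧ ∀ β : Fin n → ℕ, β ≤ α → IsCover G k β → β = α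

/-- A free parameter pair. -/
def IsFreeParameterPair {n r : ℕ} (G : SimpleGraph (Fin n)) (a b : Fin r → Fin n) : Prop :=
  Function.Injective a ∧ Function.Injective b ∧
  (∀ i j : Fin r, ¬ G.Adj (a i) (a j)) ∧
  (∀ i j : Fin r, a i ≠ b j) ∧
  (∀ i : Fin r, G.Adj (a i) (b i)) ∧
  (∀ i j : Fin r, G.Adj (a i) (b j) → i ≤ j)

/-- `G` has a free parameter set of cardinality `r`. -/
def HasFreeParameterSet {n : ℕ} (G : SimpleGraph (Fin n)) (r : ℕ) : Prop :=
  ∃ a b : Fin r → Fin n, IsFreeParameterPair G a b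

theorem isBasicCover_of_minimal {n : ℕ} {G : SimpleGraph (Fin n)} {k : ℕ} {α : Fin n → ℕ}
    (h : Minimal (IsCover G k) α) : IsBasicCover G k α :=
  ⟨h.prop, fun _ hβ hc => h.eq_of_le hc hβ⟩

/-- Every cover dominates a basic cover. -/
theorem IsCover.exists_isBasicCover_le {n : ℕ} {G : SimpleGraph (Fin n)} {k : ℕ}
    {α : Fin n → ℕ} (h : IsCover G k α) : ∃ β ≤ α, IsBasicCover G k β := by
  obtain ⟨β, hβ, hmin⟩ := exists_minimal_le_of_wellFoundedLT (IsCover G k) α h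
  exact ⟨β, hβ, isBasicCover_of_minimal hmin⟩

theorem IsBasicCover.le {n : ℕ} {G : SimpleGraph (Fin n)} {k : ℕ} {α : Fin n → ℕ}
    (h : IsBasicCover G k α) (v : Fin n) : α v ≤ k := by
  have hcover : IsCover G k (fun v => min (α v) k) := by
    intro i j hij
    have := h.1 hij
    dsimp only
    omega
  have := congrFun (h.2 _ (fun v => min_le_left _ _) hcover) v
  dsimp only at this
  omega

theorem finite_isBasicCover {n : ℕ} (G : SimpleGraph (Fin n)) (k : ℕ) :
    Finite {α : Fin n → ℕ // IsBasicCover G k α} :=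
  Set.Finite.subset (Set.finite_Iic fun _ => k) fun _ h v => IsBasicCover.le h v

/-- An antitone assignment of values at most `m` to a free parameter set extends to a basic
`2m`-cover. -/
theorem IsFreeParameterPair.exists_isBasicCover {n r m : ℕ} {G : SimpleGraph (Fin n)}
    {a b : Fin r → Fin n} (h : IsFreeParameterPair G a b) {c : Fin r → ℕ} (hc : Antitone c)
    (hcm : ∀ i, c i ≤ m) : ∃ β, IsBasicCover G (m + m) β ∧ ∀ i, β (a i) = c i := by
  classical
  obtain ⟨ha, -, hind, hab, hadj, hle⟩ := h
  let g : Fin n → ℕ := fun v =>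
    max m ((Finset.univ.filter fun i => G.Adj (a i) v).sup fun i => m + m - c i)
  let α : Fin n → ℕ := Function.extend a c g
  have hαa (i) : α (a i) = c i := ha.extend_apply c g i
  have hαg {v} (hv : ¬ ∃ i, a i = v) : α v = g v := Function.extend_apply' c g v hv
  have hgm (v) : m ≤ g v := le_max_left _ _
  have hg {i v} (hiv : G.Adj (a i) v) : m + m - c i ≤ g v :=
    le_max_of_le_right
      (Finset.le_sup (f := fun i => m + m - c i) (Finset.mem_filter.2 ⟨Finset.mem_univ i, hiv⟩))
  have hgb (i) : g (b i) ≤ m + m - c i := by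
    refine max_le (by have := hcm i; omega) (Finset.sup_le fun j hj => ?_)
    have := hc (hle j i (Finset.mem_filter.1 hj).2)
    omega
  have hαb (i) : α (b i) = g (b i) := hαg fun ⟨j, hj⟩ => hab j i hj
  have hcover : IsCover G (m + m) α := by
    intro u v huv
    by_cases hu : ∃ i, a i = u
    · obtain ⟨i, rfl⟩ := hu
      rw [hαa, hαg fun ⟨j, hj⟩ => hind i j (hj ▸ huv)]
      have := hg huv
      omega
    · rw [hαg hu]
      by_cases hv : ∃ i, a i = v
      · obtain ⟨i, rfl⟩ := hv
        rw [hαa]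
        have := hg huv.symm
        omega
      · rw [hαg hv]
        exact add_le_add (hgm u) (hgm v)
  obtain ⟨β, hβα, hβ⟩ := hcover.exists_isBasicCover_le
  refine ⟨β, hβ, fun i => ?_⟩
  have h₁ : β (a i) ≤ c i := (hβα (a i)).trans_eq (hαa i)
  have h₂ : β (b i) ≤ m + m - c i := (hβα (b i)).trans ((hαb i).trans_le (hgb i))
  have h₃ := hβ.1 (hadj i)
  have h₄ := hcm i
  omega

/-- Let `G` be a connected graph with a free parameter set of cardinality
`r`. Then for every even natural number `k > 2r`, the number of basic `k`-covers of `G` is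
at least the binomial coefficient `C(k/2 + 1, r)`. -/
theorem card_basicCovers_ge_choose {n r : ℕ} (G : SimpleGraph (Fin n))
    (hconn : G.Connected) (hfree : HasFreeParameterSet G r) :
    ∀ k : ℕ, Even k → 2 * r < k →
      (k / 2 + 1).choose r ≤ Nat.card {α : Fin n → ℕ // IsBasicCover G k α} := by
  rintro k ⟨m, rfl⟩ -
  obtain ⟨a, b, hab⟩ := hfree
  have hfin := finite_isBasicCover G (m + m)
  let D := Finset.powersetCard r (Finset.range (m + 1))
  have hcard (S : D) : S.1.card = r := (Finset.mem_powersetCard.1 S.2).2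
  let c (S : D) (i : Fin r) : ℕ := S.1.orderEmbOfFin (hcard S) i.rev
  have hc (S : D) : Antitone (c S) := fun i j hij =>
    (S.1.orderEmbOfFin (hcard S)).monotone (Fin.rev_le_rev.2 hij)
  have hcm (S : D) (i) : c S i ≤ m :=
    Finset.mem_range_succ_iff.1
      ((Finset.mem_powersetCard.1 S.2).1 (Finset.orderEmbOfFin_mem S.1 (hcard S) i.rev))
  have hrange (S : D) : Set.range (c S) = S.1 := by
    rw [← Finset.range_orderEmbOfFin S.1 (hcard S)]
    exact Fin.rev_surjective.range_comp _
  choose β hβ hβc using fun S => hab.exists_isBasicCover (hc S) (hcm S)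
  have hinj : Function.Injective
      (fun S => (⟨β S, hβ S⟩ : {α : Fin n → ℕ // IsBasicCover G (m + m) α})) := by
    intro S T hST
    have hcST : c S = c T := funext fun i => by
      rw [← hβc S, ← hβc T, Subtype.mk.inj hST]
    exact Subtype.ext (Finset.coe_injective (by rw [← hrange S, ← hrange T, hcST]))
  have := Nat.card_le_card_of_injective _ hinj
  rw [Nat.card_eq_fintype_card, Fintype.card_coe, Finset.card_powersetCard,
    Finset.card_range] at this
  rwa [show (m + m) / 2 = m by omega]
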